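/- In a variable-regular Tanner graph with variable node degree d_l = 3 and girth 6, the normal graph of a (6,0) elementary trapping set is a simple 3-regular graph on 6 vertices, and hence is isomorphic to either the prism graph or K_{3,3}. -/

import Mathlib

open SimpleGraph Finset

/-- Degree of a node `c` in the subgraph induced by the variable-node set `S`:
the number of neighbors of `c` inside `S`. -/
def degIn {V : Type} [DecidableEq V] (G : SimpleGraph V) [DecidableRel G.Adj]
    (S : Finset V) (c : V) : Nat :=
  (S.filter fun v => G.Adj c v).card

/-- The normal graph of an elementary trapping set `S`: variable nodes are adjacent iff
they share a degree-2 (satisfied) check node in the induced subgraph. -/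
def normalGraph {V : Type} [DecidableEq V] (G : SimpleGraph V) [DecidableRel G.Adj]
    (isVar : V → Prop) (S : Finset V) : SimpleGraph {x // x ∈ S} :=
  SimpleGraph.fromRel (fun u w =>
    ∃ c, ¬ isVar c ∧ degIn G S c = 2 ∧ G.Adj c u.1 ∧ G.Adj c w.1)

/-- Degree of a vertex in a (possibly nonconstructive) simple graph. -/
noncomputable def ndeg {W : Type} (H : SimpleGraph W) (v : W) : Nat :=
  (H.neighborSet v).ncard

/-- The prism graph `K_3 □ K_2`. -/
def prism : SimpleGraph (Fin 3 × Fin 2) :=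
  SimpleGraph.boxProd (⊤ : SimpleGraph (Fin 3)) (⊤ : SimpleGraph (Fin 2))

/-- The complete bipartite graph `K_{3,3}`. -/
def K33 : SimpleGraph (Fin 3 ⊕ Fin 3) := completeBipartiteGraph (Fin 3) (Fin 3)

/-! Every check node at the trapping set `S` meets exactly two nodes of `S`, so sending a check at
`v ∈ S` to the other node it meets maps onto the neighbors of `v` in the normal graph. This map
is injective because the Tanner graph has no 4-cycle, so the normal graph is again cubic.

For a cubic graph on six vertices there are two cases. If it is triangle-free, adjacent vertices
have disjoint neighborhoods of size three, which therefore are complementary, and the graph is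
`K_{3,3}`. Otherwise each of the three vertices outside a triangle has a neighbor in it, while
each vertex of the triangle has only one neighbor outside; the edges leaving the triangle thus
form a perfect matching, which forces the outside vertices to form a triangle too. -/

lemma commonNeighbors_subsingleton_of_four_lt_egirth {V : Type*} {G : SimpleGraph V}
    (hG : 4 < G.egirth) {v w : V} (hvw : v ≠ w) : (G.commonNeighbors v w).Subsingleton := by
  rintro c ⟨hvc, hwc⟩ d ⟨hvd, hwd⟩
  by_contra hcd
  rw [mem_neighborSet] at hvc hwc hvd hwd
  let p : G.Walk v v := .cons hvc (.cons hwc.symm (.cons hwd (.cons hvd.symm .nil)))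
  have hp : p.IsCycle := by
    simp only [p, Walk.cons_isCycle_iff, Walk.cons_isPath_iff, Walk.isPath_iff_nil,
      Walk.support_cons, Walk.support_nil, Walk.edges_cons, Walk.edges_nil, List.mem_cons,
      List.not_mem_nil, Sym2.eq_iff]
    grind [hvc.ne, hwc.ne, hvd.ne, hwd.ne]
  exact (egirth_le_length hp).not_gt hG

lemma ndeg_eq_degree {W : Type} (H : SimpleGraph W) (v : W) [Fintype (H.neighborSet v)] :
    ndeg H v = H.degree v := by
  rw [ndeg, Set.ncard_eq_toFinset_card', ← neighborFinset_def, card_neighborFinset_eq_degree]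

section NormalGraph

variable {V : Type} [DecidableEq V] {G : SimpleGraph V} [DecidableRel G.Adj] {isVar : V → Prop}
  {S : Finset V}

lemma normalGraph_adj {u w : {x // x ∈ S}} :
    (normalGraph G isVar S).Adj u w ↔
      u ≠ w ∧ ∃ c, ¬ isVar c ∧ degIn G S c = 2 ∧ G.Adj c u ∧ G.Adj c w := by
  simp only [normalGraph, fromRel_adj]
  grind

lemma exists_filter_adj_eq_pair_of_degIn_eq_two {c v : V} (hdeg : degIn G S c = 2) (hv : v ∈ S)
    (hcv : G.Adj c v) : ∃ w ≠ v, {u ∈ S | G.Adj c u} = {v, w} := by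
  obtain ⟨x, y, hxy, hfilter⟩ := card_eq_two.1 hdeg
  have hmem : v ∈ ({x, y} : Finset V) := hfilter ▸ mem_filter.2 ⟨hv, hcv⟩
  obtain rfl | rfl : v = x ∨ v = y := by simpa using hmem
  · exact ⟨y, hxy.symm, hfilter⟩
  · exact ⟨x, hxy, hfilter.trans (pair_comm x v)⟩

lemma ndeg_normalGraph (hgirth : 4 < G.egirth) (v : {x // x ∈ S})
    (hcheck : ∀ c, G.Adj v c → ¬ isVar c ∧ degIn G S c = 2) :
    ndeg (normalGraph G isVar S) v = ndeg G v := by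
  have hother (c : V) (hc : G.Adj v c) :
      ∃ w : {x // x ∈ S}, w ≠ v ∧ ∀ u : {x // x ∈ S}, G.Adj c u ↔ u = v ∨ u = w := by
    obtain ⟨w, hwv, hpair⟩ :=
      exists_filter_adj_eq_pair_of_degIn_eq_two (hcheck c hc).2 v.2 hc.symm
    have hiff (u : V) : u ∈ S ∧ G.Adj c u ↔ u = v ∨ u = w := by
      simpa using Finset.ext_iff.1 hpair u
    refine ⟨⟨w, ((hiff w).2 (.inr rfl)).1⟩, Subtype.coe_ne_coe.1 hwv, fun u => ?_⟩
    rw [Subtype.ext_iff, Subtype.ext_iff, ← hiff, and_iff_right u.2]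
  choose other hother_ne hother_iff using hother
  have hother_adj (c : V) (hc : G.Adj v c) : G.Adj c (other c hc) :=
    (hother_iff c hc _).2 (.inr rfl)
  refine (Set.ncard_congr other ?mapsTo ?injective ?surjective).symm
  case mapsTo =>
    intro c (hc : G.Adj v c)
    exact normalGraph_adj.2 ⟨(hother_ne c hc).symm, c, (hcheck c hc).1, (hcheck c hc).2,
      hc.symm, hother_adj c hc⟩
  case injective =>
    intro c d hc hd hcd
    exact commonNeighbors_subsingleton_of_four_lt_egirth hgirth
      (Subtype.coe_ne_coe.2 (hother_ne c hc).symm) ⟨hc, (hother_adj c hc).symm⟩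
      ⟨hd, hcd ▸ (hother_adj d hd).symm⟩
  case surjective =>
    intro w hw
    obtain ⟨hvw, c, -, -, hcv, hcw⟩ := normalGraph_adj.1 hw
    exact ⟨c, hcv.symm, (((hother_iff c hcv.symm w).1 hcw).resolve_left hvw.symm).symm⟩

end NormalGraph

section Classification

variable {W : Type*} {H : SimpleGraph W} {n : ℕ}

lemma nonempty_iso_completeBipartiteGraph (p : W → Prop)
    (hadj : ∀ u v, H.Adj u v ↔ (p u ↔ ¬ p v)) :
    Nonempty (H ≃g completeBipartiteGraph {v // p v} {v // ¬ p v}) := by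
  classical
  refine ⟨RelIso.symm ⟨Equiv.sumCompl p, ?_⟩⟩
  rintro (⟨u, hu⟩ | ⟨u, hu⟩) (⟨v, hv⟩ | ⟨v, hv⟩) <;> simp [hadj, hu, hv]

lemma nonempty_iso_boxProd_top_of_matching {p : W → Prop} (φ : {v // p v} ≃ {v // ¬ p v})
    (hp : H.IsClique {v | p v}) (hnp : H.IsClique {v | ¬ p v})
    (hφ : ∀ (u : {v // p v}) (w : {v // ¬ p v}), H.Adj u w ↔ φ u = w) :
    Nonempty (H ≃g (⊤ : SimpleGraph {v // p v}) □ (⊤ : SimpleGraph (Fin 2))) := by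
  classical
  let e : {v // p v} × Fin 2 ≃ W :=
    (Equiv.prodComm _ _).trans <| (finTwoEquiv.prodCongr (.refl _)).trans <|
      (Equiv.boolProdEquivSum _).trans <| (Equiv.sumCongr (.refl _) φ).trans (Equiv.sumCompl p)
  have hadj_left (u v : {v // p v}) : H.Adj u v ↔ u ≠ v :=
    ⟨fun h huv => h.ne (congrArg _ huv), fun h => hp u.2 v.2 (Subtype.coe_ne_coe.2 h)⟩
  have hadj_right (u v : {v // ¬ p v}) : H.Adj u v ↔ u ≠ v :=
    ⟨fun h huv => h.ne (congrArg _ huv), fun h => hnp u.2 v.2 (Subtype.coe_ne_coe.2 h)⟩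
  have he_zero (u) : e (u, 0) = u := rfl
  have he_one (u) : e (u, 1) = φ u := rfl
  refine ⟨RelIso.symm ⟨e, ?_⟩⟩
  rintro ⟨u, i⟩ ⟨v, j⟩
  fin_cases i <;> fin_cases j
  · simp [he_zero, hadj_left]
  · simp [he_zero, he_one, hφ]
  · simp [he_zero, he_one, H.adj_comm, hφ, eq_comm]
  · simp [he_one, hadj_right]

variable [Fintype W] [DecidableRel H.Adj]

lemma neighborFinset_eq_compl_of_cliqueFree_three [DecidableEq W] (hfree : H.CliqueFree 3)
    {u v : W} (huv : H.Adj u v) (hdeg : Fintype.card W ≤ H.degree u + H.degree v) :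
    H.neighborFinset v = (H.neighborFinset u)ᶜ := by
  refine eq_of_subset_of_card_le (fun w hvw => ?_) ?_
  · rw [mem_neighborFinset] at hvw
    rw [mem_compl, mem_neighborFinset]
    exact fun huw => hfree {u, v, w} (is3Clique_triple_iff.2 ⟨huv, huw, hvw⟩)
  · rw [card_compl, card_neighborFinset_eq_degree, card_neighborFinset_eq_degree]
    lia

lemma nonempty_iso_completeBipartiteGraph_of_cliqueFree_three [Nonempty W]
    (hreg : H.IsRegularOfDegree n) (hcard : Fintype.card W = 2 * n) (hfree : H.CliqueFree 3) :
    Nonempty (H ≃g completeBipartiteGraph (Fin n) (Fin n)) := by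
  classical
  obtain ⟨a⟩ := ‹Nonempty W›
  have hcompl {u v w : W} (huv : H.Adj u v) : H.Adj v w ↔ ¬ H.Adj u w := by
    have hdeg : Fintype.card W ≤ H.degree u + H.degree v := by
      rw [hreg u, hreg v, hcard]
      lia
    simpa using Finset.ext_iff.1 (neighborFinset_eq_compl_of_cliqueFree_three hfree huv hdeg) w
  obtain ⟨b, hab⟩ : ∃ b, H.Adj a b := by
    rw [← degree_pos_iff_exists_adj, hreg a]
    have := Fintype.card_pos_iff.2 ⟨a⟩
    lia
  have hadj (u v : W) : H.Adj u v ↔ (H.Adj a u ↔ ¬ H.Adj a v) := by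
    by_cases hau : H.Adj a u
    · simp [hau, hcompl hau]
    · have hbu : H.Adj b u := (hcompl hab).2 hau
      simp [hau, hcompl hbu, hcompl hab]
  have hcard_adj : Fintype.card {v // H.Adj a v} = n := by
    rw [Fintype.card_subtype, ← neighborFinset_eq_filter, card_neighborFinset_eq_degree, hreg a]
  have hcard_not_adj : Fintype.card {v // ¬ H.Adj a v} = n := by
    rw [Fintype.card_subtype_compl, hcard_adj, hcard]
    lia
  exact (nonempty_iso_completeBipartiteGraph (H.Adj a) hadj).map fun e =>
    e.trans (completeBipartiteGraphCongr
      (Fintype.equivFinOfCardEq hcard_adj) (Fintype.equivFinOfCardEq hcard_not_adj))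

variable {s : Finset W}

lemma card_neighborFinset_sdiff_add_card_of_isClique [DecidableEq W] (hs : H.IsClique s) {v : W}
    (hv : v ∈ s) :
    (H.neighborFinset v \ s).card + s.card = H.degree v + 1 := by
  have hinter : H.neighborFinset v ∩ s = s.erase v := by
    ext w
    simp only [mem_inter, mem_neighborFinset, mem_erase]
    exact ⟨fun h => ⟨h.1.ne', h.2⟩, fun h => ⟨hs hv h.2 h.1.symm, h.2⟩⟩
  rw [← card_neighborFinset_eq_degree, ← card_sdiff_add_card_inter (H.neighborFinset v) s, hinter,
    add_assoc, card_erase_add_one hv]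

lemma exists_mem_adj_of_notMem {w : W} (hw : w ∉ s)
    (hdeg : Fintype.card W ≤ s.card + H.degree w) : ∃ v ∈ s, H.Adj v w := by
  classical
  by_contra! hnone
  have hsub : H.neighborFinset w ⊆ sᶜ.erase w := by
    intro v hv
    rw [mem_neighborFinset] at hv
    exact mem_erase.2 ⟨hv.ne', mem_compl.2 fun hvs => hnone v hvs hv.symm⟩
  have hlt := (card_le_card hsub).trans_lt (card_erase_lt_of_mem (mem_compl.2 hw))
  rw [card_neighborFinset_eq_degree, card_compl] at hlt
  lia

lemma exists_equiv_adj_iff_of_isNClique (hreg : H.IsRegularOfDegree n)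
    (hcard : Fintype.card W = 2 * n) (hs : H.IsNClique n s) :
    ∃ φ : {v // v ∈ s} ≃ {v // v ∉ s},
      ∀ (u : {v // v ∈ s}) (w : {v // v ∉ s}), H.Adj u w ↔ φ u = w := by
  classical
  have houtside (u : {v // v ∈ s}) : ∃ x : {v // v ∉ s}, ∀ w : {v // v ∉ s}, H.Adj u w ↔ x = w := by
    have hone : (H.neighborFinset u \ s).card = 1 := by
      have hsum := card_neighborFinset_sdiff_add_card_of_isClique hs.isClique u.2
      rw [hs.card_eq, hreg u] at hsum
      lia
    obtain ⟨x, hx⟩ := card_eq_one.1 hone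
    have hiff (w : W) : H.Adj u w ∧ w ∉ s ↔ w = x := by simpa using Finset.ext_iff.1 hx w
    refine ⟨⟨x, ((hiff x).2 rfl).2⟩, fun w => ?_⟩
    rw [Subtype.ext_iff, eq_comm, ← hiff, and_iff_left w.2]
  choose f hf using houtside
  have hsurj : Function.Surjective f := by
    intro w
    obtain ⟨u, hu, huw⟩ := exists_mem_adj_of_notMem w.2 (by rw [hs.card_eq, hreg w, hcard]; lia)
    exact ⟨⟨u, hu⟩, (hf ⟨u, hu⟩ w).1 huw⟩
  have hcard_eq : Fintype.card {v // v ∈ s} = Fintype.card {v // v ∉ s} := by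
    rw [Fintype.card_subtype_compl, Fintype.card_coe, hs.card_eq, hcard]
    lia
  exact ⟨.ofBijective f ((Fintype.bijective_iff_surjective_and_card f).2 ⟨hsurj, hcard_eq⟩), hf⟩

lemma isClique_compl_of_isNClique (hreg : H.IsRegularOfDegree n)
    (hcard : Fintype.card W = 2 * n) (hs : H.IsNClique n s) : H.IsClique (s : Set W)ᶜ := by
  classical
  obtain ⟨φ, hφ⟩ := exists_equiv_adj_iff_of_isNClique hreg hcard hs
  intro u (hus : u ∉ s) w (hws : w ∉ s) huw
  let partner := φ.symm ⟨u, hus⟩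
  have hsub : H.neighborFinset u ⊆ insert (partner : W) (sᶜ.erase u) := by
    intro v hv
    rw [mem_neighborFinset] at hv
    rw [mem_insert, mem_erase, mem_compl]
    by_cases hvs : v ∈ s
    · exact .inl (congrArg Subtype.val (φ.eq_symm_apply.2 ((hφ ⟨v, hvs⟩ ⟨u, hus⟩).1 hv.symm)))
    · exact .inr ⟨hv.ne', hvs⟩
  have hle : (insert (partner : W) (sᶜ.erase u)).card ≤ (H.neighborFinset u).card := by
    grw [card_insert_le, card_erase_add_one (mem_compl.2 hus), card_compl, hs.card_eq, hcard]
    rw [card_neighborFinset_eq_degree, hreg u]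
    lia
  rw [← mem_neighborFinset, eq_of_subset_of_card_le hsub hle]
  exact mem_insert_of_mem (mem_erase.2 ⟨huw.symm, mem_compl.2 hws⟩)

lemma nonempty_iso_boxProd_top_of_isNClique (hreg : H.IsRegularOfDegree n)
    (hcard : Fintype.card W = 2 * n) (hs : H.IsNClique n s) :
    Nonempty (H ≃g (⊤ : SimpleGraph (Fin n)) □ (⊤ : SimpleGraph (Fin 2))) := by
  obtain ⟨φ, hφ⟩ := exists_equiv_adj_iff_of_isNClique hreg hcard hs
  obtain ⟨e⟩ := nonempty_iso_boxProd_top_of_matching φ hs.isClique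
    (isClique_compl_of_isNClique hreg hcard hs) hφ
  let ε : {v // v ∈ s} ≃ Fin n := Fintype.equivFinOfCardEq (by rw [Fintype.card_coe, hs.card_eq])
  exact ⟨e.trans ⟨ε.prodCongr (.refl _), by simp [boxProd_adj]⟩⟩

lemma nonempty_iso_prism_or_nonempty_iso_K33 (hreg : H.IsRegularOfDegree 3)
    (hcard : Fintype.card W = 6) : Nonempty (H ≃g prism) ∨ Nonempty (H ≃g K33) := by
  by_cases hfree : H.CliqueFree 3
  · have : Nonempty W := Fintype.card_pos_iff.1 (by lia)
    exact .inr (nonempty_iso_completeBipartiteGraph_of_cliqueFree_three hreg hcard hfree)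
  · obtain ⟨s, hs⟩ : ∃ s, H.IsNClique 3 s := by simpa [CliqueFree] using hfree
    exact .inl (nonempty_iso_boxProd_top_of_isNClique hreg hcard hs)

end Classification

theorem stmt8_general {V : Type} [DecidableEq V] (G : SimpleGraph V) [DecidableRel G.Adj]
    (isVar : V → Prop) (hbip : ∀ u v, G.Adj u v → (isVar u ↔ ¬ isVar v))
    (hreg : ∀ v, isVar v → ndeg G v = 3) (hgirth : 4 < G.egirth)
    (S : Finset V) (hSvar : ∀ v ∈ S, isVar v) (hS6 : S.card = 6)
    (hets : ∀ c, ¬ isVar c → degIn G S c ≤ 2) (hb : ∀ c, ¬ isVar c → degIn G S c ≠ 1) :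
    (∀ v, ndeg (normalGraph G isVar S) v = 3) ∧
    (Nonempty (normalGraph G isVar S ≃g prism) ∨
      Nonempty (normalGraph G isVar S ≃g K33)) := by
  classical
  have hcheck (v : {x // x ∈ S}) (c : V) (hvc : G.Adj v c) :
      ¬ isVar c ∧ degIn G S c = 2 := by
    have hc : ¬ isVar c := (hbip v c hvc).1 (hSvar v v.2)
    have hpos : 0 < degIn G S c := card_pos.2 ⟨v, mem_filter.2 ⟨v.2, hvc.symm⟩⟩
    have hle := hets c hc
    have hne := hb c hc
    exact ⟨hc, by lia⟩
  have hndeg (v : {x // x ∈ S}) : ndeg (normalGraph G isVar S) v = 3 := by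
    rw [ndeg_normalGraph hgirth v (hcheck v), hreg v (hSvar v v.2)]
  refine ⟨hndeg, nonempty_iso_prism_or_nonempty_iso_K33 (fun v => ?_) ?_⟩
  · rw [← ndeg_eq_degree, hndeg v]
  · rw [Fintype.card_coe, hS6]

theorem stmt8 {V : Type} [Fintype V] [DecidableEq V]
    (G : SimpleGraph V) [DecidableRel G.Adj]
    (isVar : V → Prop) [DecidablePred isVar]
    (hbip : ∀ u v, G.Adj u v → (isVar u ↔ ¬ isVar v))
    (hreg : ∀ v, isVar v → G.degree v = 3)
    (hgirth : G.egirth = 6)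
    (S : Finset V) (hSvar : ∀ v ∈ S, isVar v) (hS6 : S.card = 6)
    (hets : ∀ c, ¬ isVar c → degIn G S c ≤ 2)
    (hb : (univ.filter fun c => ¬ isVar c ∧ degIn G S c = 1).card = 0) :
    (∀ v, ndeg (normalGraph G isVar S) v = 3) ∧
    (Nonempty (normalGraph G isVar S ≃g prism) ∨
      Nonempty (normalGraph G isVar S ≃g K33)) := by
  exact stmt8_general G isVar hbip (by simpa only [ndeg_eq_degree] using hreg)
    (by rw [hgirth]; decide) S hSvar hS6 hets (by simpa [filter_eq_empty_iff] using hb)
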